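/- arXiv:2305.06082 — 6 statements merged into one kernel-verified Lean document; each statement's English description precedes it below -/
import Mathlib

section
/- Let M ≥ 1 and K ≥ 2 be integers, let q be a box-probability matrix with q_{m,k} > 0 for all m ∈ [M], k ∈ [K], and let μ ∈ ℝ^K have a unique maximiser a* = a*(μ). Then for every allocation w ∈ Σ_M, ψ(q, μ, w) = min_{k ≠ a*} [ (w^A_k · w^A_{a*}) / (w^A_k + w^A_{a*}) ] · (μ_{a*} − μ_k)² / 2, where w^A_a = Σ_{m=1}^M w_m q_{m,a}. -/
/-!
Writing `A_k = ∑_m w_m q_{m,k} > 0`, the cost of `lam` is `∑_k A_k (μ_k - lam_k)² / 2`.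

Lower bound: if `lam_astar < lam_k`, keep only the terms of `k` and `astar`. The displacements
`x = lam_k - μ_k` and `y = μ_astar - lam_astar` satisfy `x + y > μ_astar - μ_k > 0`, and
`(A + B)(A x² + B y²) - A B (x + y)² = (A x - B y)² ≥ 0` (`pair_cost_ge`).

Upper bound: for each `k ≠ astar`, move `astar` to the weighted mean `c` of `μ_k` and `μ_astar`,
move `k` to `c + δ` and leave the other coordinates alone. For `δ > 0` this is an alternative,
and its cost tends to the claimed value as `δ → 0` (`pair_cost_eq`). The limit is needed
because alternatives satisfy a strict inequality.
-/

/-- `ψ(q, μ, w)` for best-arm `astar`: the infimum over alternative instances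
`λ ∈ Alt(μ) = {λ : ∃ k ≠ astar, λ_k > λ_astar}` of
`∑_m ∑_k w_m q_{m,k} (μ_k − λ_k)² / 2`. -/
noncomputable def psi {M K : ℕ} (q : Fin M → Fin K → ℝ) (μ : Fin K → ℝ) (astar : Fin K)
    (w : Fin M → ℝ) : ℝ :=
  sInf {v : ℝ | ∃ lam : Fin K → ℝ, (∃ k, k ≠ astar ∧ lam astar < lam k) ∧
    v = ∑ m, ∑ k, w m * q m k * ((μ k - lam k) ^ 2 / 2)}

/-- Two-arm lower bound: total displacement at least `d` costs at least
`A B / (A + B) · d² / 2`. -/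
lemma pair_cost_ge {A B x y d : ℝ} (hA : 0 < A) (hB : 0 < B) (hd : 0 ≤ d) (hxy : d ≤ x + y) :
    A * B / (A + B) * (d ^ 2 / 2) ≤ A * (x ^ 2 / 2) + B * (y ^ 2 / 2) := by
  have hAB : 0 < A + B := by positivity
  have h1 : d ^ 2 ≤ (x + y) ^ 2 := by gcongr
  have h2 : A * B * d ^ 2 ≤ A * B * (x + y) ^ 2 := by gcongr
  rw [div_mul_eq_mul_div, div_le_iff₀ hAB]
  nlinarith [sq_nonneg (A * x - B * y)]

/-- At the weighted mean of `u` and `v` the two-arm lower bound is attained. -/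
lemma pair_cost_eq {A B u v : ℝ} (hA : 0 < A) (hB : 0 < B) :
    A * ((u - ((A * u + B * v) / (A + B) + 0)) ^ 2 / 2) +
      B * ((v - (A * u + B * v) / (A + B)) ^ 2 / 2) =
      A * B / (A + B) * ((v - u) ^ 2 / 2) := by
  have hAB : A + B ≠ 0 := by positivity
  field_simp
  ring

/-- for a box-probability matrix `q` with strictly positive entries and `μ`
with unique maximiser `astar`, for every allocation `w` in the simplex,
`ψ(q, μ, w) = min_{k ≠ astar} (w^A_k w^A_astar)/(w^A_k + w^A_astar) · (μ_astar − μ_k)²/2`,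
where `w^A_a = ∑_m w_m q_{m,a}`. -/
theorem stmt0 (M K : ℕ) (hM : 1 ≤ M) (hK : 2 ≤ K)
    (q : Fin M → Fin K → ℝ) (hqpos : ∀ m k, 0 < q m k) (hqsum : ∀ m, ∑ k, q m k = 1)
    (μ : Fin K → ℝ) (astar : Fin K) (hstar : ∀ k, k ≠ astar → μ k < μ astar)
    (w : Fin M → ℝ) (hw0 : ∀ m, 0 ≤ w m) (hw1 : ∑ m, w m = 1) :
    psi q μ astar w =
      ⨅ k : {k : Fin K // k ≠ astar},
        ((∑ m, w m * q m k.1) * (∑ m, w m * q m astar)) /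
          ((∑ m, w m * q m k.1) + (∑ m, w m * q m astar)) *
          ((μ astar - μ k.1) ^ 2 / 2) := by
  set A : Fin K → ℝ := fun k => ∑ m, w m * q m k with hA
  have hApos : ∀ k, 0 < A k := by
    intro k
    have hnn : ∀ m ∈ Finset.univ, 0 ≤ w m * q m k := fun m _ =>
      mul_nonneg (hw0 m) (hqpos m k).le
    refine lt_of_le_of_ne (Finset.sum_nonneg hnn) fun h0 => ?_
    have hz := (Finset.sum_eq_zero_iff_of_nonneg hnn).1 h0.symm
    have hw : ∀ m, w m = 0 := fun m =>
      (mul_eq_zero.1 (hz m (Finset.mem_univ m))).resolve_right (hqpos m k).ne'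
    simp [hw] at hw1
  have hcost : ∀ lam : Fin K → ℝ, ∑ m, ∑ k, w m * q m k * ((μ k - lam k) ^ 2 / 2) =
      ∑ k, A k * ((μ k - lam k) ^ 2 / 2) := by
    intro lam
    rw [Finset.sum_comm]
    simp only [hA, Finset.sum_mul]
  have hne : Nonempty {k : Fin K // k ≠ astar} := by
    have : Nontrivial (Fin K) := Fin.nontrivial_iff_two_le.2 hK
    obtain ⟨k, hk⟩ := exists_ne astar
    exact ⟨⟨k, hk⟩⟩
  change psi q μ astar w = ⨅ k : {k : Fin K // k ≠ astar},
    (A k.1 * A astar) / (A k.1 + A astar) * ((μ astar - μ k.1) ^ 2 / 2)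
  unfold psi
  simp only [hcost]
  apply le_antisymm
  · refine le_ciInf fun ⟨k, hk⟩ => ?_
    set c : ℝ := (A k * μ k + A astar * μ astar) / (A k + A astar) with hc
    let f : ℝ → ℝ := fun δ =>
      A k * ((μ k - (c + δ)) ^ 2 / 2) + A astar * ((μ astar - c) ^ 2 / 2)
    have hf0 : f 0 = (A k * A astar) / (A k + A astar) * ((μ astar - μ k) ^ 2 / 2) :=
      pair_cost_eq (hApos k) (hApos astar)
    have hf : Filter.Tendsto f (nhdsWithin 0 (Set.Ioi 0)) (nhds (f 0)) := by
      have : Continuous f := by fun_prop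
      exact this.continuousAt.tendsto.mono_left nhdsWithin_le_nhds
    rw [← hf0]
    refine ge_of_tendsto hf ?_
    filter_upwards [self_mem_nhdsWithin] with δ hδ
    refine csInf_le ⟨0, ?_⟩ ?_
    · rintro v ⟨lam, -, rfl⟩
      exact Finset.sum_nonneg fun j _ => mul_nonneg (hApos j).le (by positivity)
    · refine ⟨fun j => if j = k then c + δ else if j = astar then c else μ j,
        ⟨k, hk, ?_⟩, ?_⟩
      · simpa [hk.symm] using hδ
      · rw [Fintype.sum_eq_add k astar hk]
        · simp [f, hk.symm]
        · rintro j ⟨hjk, hja⟩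
          simp [hjk, hja]
  · refine le_csInf ?_ ?_
    · obtain ⟨k, hk⟩ := hne
      exact ⟨_, fun j => if j = k then 1 else 0, ⟨k, hk, by simp [hk.symm]⟩, rfl⟩
    · rintro v ⟨lam, ⟨k, hk, hlt⟩, rfl⟩
      refine (ciInf_le (Set.finite_range _).bddBelow ⟨k, hk⟩).trans ?_
      have hpair := pair_cost_ge (x := lam k - μ k) (y := μ astar - lam astar)
        (hApos k) (hApos astar) (sub_nonneg.2 (hstar k hk).le) (by linarith)
      rw [← neg_sub (μ k) (lam k), neg_sq] at hpair
      refine hpair.trans ?_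
      rw [← Finset.sum_pair (f := fun j => A j * ((μ j - lam j) ^ 2 / 2)) hk]
      exact Finset.sum_le_sum_of_subset_of_nonneg (Finset.subset_univ _)
        fun j _ _ => mul_nonneg (hApos j).le (by positivity)
end

section
/- Let M = 2, K = 4, μ₀ = (1/2, 2/5, 3/10, 3/10) ∈ ℝ⁴, and let q₀ be the box-probability matrix with rows q₀_{1,·} = (3/10, 3/10, 3/10, 1/10) and q₀_{2,·} = (3/10, 3/10, 1/10, 3/10). Then for every w ∈ Σ₂, ψ(q₀, μ₀, w) = 3/4000. Consequently T*(q₀, μ₀) = 3/4000 and every w ∈ Σ₂ attains the supremum, i.e., W*(q₀, μ₀) = Σ₂ (the optimal allocation is non-unique). -/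
/-!
Moving arms `0` and `1`, which carry weight `3/10` in both boxes, to their midpoint `9/20` costs
`3/4000` whatever the allocation is (`exCost_eq`). Arms `2` and `3` have a gap to arm `0` twice as
large and a weight at least `1/10`, so making one of them beat arm `0` costs at least `3/2000`;
hence the infimum defining `ψ` is always the one from arm `1` (`le_exCost`, `psi_ex`). It is not
attained, because the alternative set is defined by a strict inequality. As `ψ` is constant on the
simplex, the claims on `T*` and on the set of optimal allocations follow.
-/

/-- The probability simplex `Σ_M` on the boxes. -/
def simplex (M : ℕ) : Set (Fin M → ℝ) :=
  {w | (∀ m, 0 ≤ w m) ∧ ∑ m, w m = 1}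

/-- `T*(q, μ) = sup_{w ∈ Σ_M} ψ(q, μ, w)`. -/
noncomputable def Tstar {M K : ℕ} (q : Fin M → Fin K → ℝ) (μ : Fin K → ℝ)
    (astar : Fin K) : ℝ :=
  sSup {v : ℝ | ∃ w ∈ simplex M, v = psi q μ astar w}

/-- The example instance: `μ₀ = (1/2, 2/5, 3/10, 3/10)` (best arm is arm `0`). -/
noncomputable def exMu : Fin 4 → ℝ := ![1/2, 2/5, 3/10, 3/10]

/-- The example box-probability matrix with rows `(3/10, 3/10, 3/10, 1/10)` and
`(3/10, 3/10, 1/10, 3/10)`. -/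
noncomputable def exQ : Fin 2 → Fin 4 → ℝ :=
  ![![3/10, 3/10, 3/10, 1/10], ![3/10, 3/10, 1/10, 3/10]]

/-- On the simplex, the transport cost of the example in closed form: the rows of `exQ` agree on
arms `0` and `1`, so only the terms of arms `2` and `3` depend on `w`. -/
lemma exCost_eq {w : Fin 2 → ℝ} (hw : w ∈ simplex 2) (lam : Fin 4 → ℝ) :
    ∑ m, ∑ k, w m * exQ m k * ((exMu k - lam k) ^ 2 / 2) =
      3 / 20 * (1 / 2 - lam 0) ^ 2 + 3 / 20 * (2 / 5 - lam 1) ^ 2 +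
      (1 / 20 + w 0 / 10) * (3 / 10 - lam 2) ^ 2 +
      (1 / 20 + w 1 / 10) * (3 / 10 - lam 3) ^ 2 := by
  have h := hw.2
  rw [Fin.sum_univ_two] at h
  have h1 : w 1 = 1 - w 0 := by linarith
  simp [exQ, exMu, Fin.sum_univ_succ, h1]
  ring

lemma le_exCost {w : Fin 2 → ℝ} (hw : w ∈ simplex 2) (lam : Fin 4 → ℝ)
    (h : ∃ k, k ≠ 0 ∧ lam 0 < lam k) :
    3 / 4000 ≤ ∑ m, ∑ k, w m * exQ m k * ((exMu k - lam k) ^ 2 / 2) := by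
  rw [exCost_eq hw]
  have h2 : 0 ≤ w 0 * (3 / 10 - lam 2) ^ 2 := mul_nonneg (hw.1 0) (sq_nonneg _)
  have h3 : 0 ≤ w 1 * (3 / 10 - lam 3) ^ 2 := mul_nonneg (hw.1 1) (sq_nonneg _)
  have s1 := sq_nonneg (2 / 5 - lam 1)
  have s2 := sq_nonneg (3 / 10 - lam 2)
  have s3 := sq_nonneg (3 / 10 - lam 3)
  obtain ⟨k, hk, hlt⟩ := h
  -- In each case the two active squares are bounded below by their tangent lines at the
  -- constrained minimiser: common value `9/20` for arm `1`, and also for arms `2` and `3`,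
  -- whose coefficient `1/20 + w m / 10` is replaced by its lower bound `1/20`.
  fin_cases k
  · exact absurd rfl hk
  · change lam 0 < lam 1 at hlt
    nlinarith [sq_nonneg (lam 0 - 9 / 20), sq_nonneg (lam 1 - 9 / 20)]
  · change lam 0 < lam 2 at hlt
    nlinarith [sq_nonneg (lam 0 - 9 / 20), sq_nonneg (lam 2 - 9 / 20)]
  · change lam 0 < lam 3 at hlt
    nlinarith [sq_nonneg (lam 0 - 9 / 20), sq_nonneg (lam 3 - 9 / 20)]

lemma psi_ex {w : Fin 2 → ℝ} (hw : w ∈ simplex 2) : psi exQ exMu 0 w = 3 / 4000 := by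
  unfold psi
  refine csInf_eq_of_forall_ge_of_forall_gt_exists_lt ?_ ?_ ?_
  · exact ⟨_, ![0, 1, 0, 0], ⟨1, by simp, by simp⟩, rfl⟩
  · rintro v ⟨lam, h, rfl⟩
    exact le_exCost hw lam h
  · intro v hv
    -- Arms `0` and `1` are moved to `9/20`, up to an excess `ε` making the inequality strict;
    -- the cost is then `3/4000 + 3/20 * (ε / 10 + ε ^ 2) < 3/4000 + ε`.
    obtain ⟨ε, hε, hε1, hεv⟩ : ∃ ε : ℝ, 0 < ε ∧ ε ≤ 1 ∧ ε ≤ v - 3 / 4000 :=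
      ⟨min 1 (v - 3 / 4000), lt_min one_pos (by linarith), min_le_left _ _, min_le_right _ _⟩
    refine ⟨_, ⟨![9 / 20, 9 / 20 + ε, 3 / 10, 3 / 10], ⟨1, by simp, by simpa using hε⟩, rfl⟩, ?_⟩
    rw [exCost_eq hw]
    simp
    nlinarith

/-- in the example instance, every allocation `w ∈ Σ₂` satisfies
`ψ(q₀, μ₀, w) = 3/4000`; consequently `T*(q₀, μ₀) = 3/4000` and the set of optimal
allocations is all of `Σ₂` (the optimal allocation is non-unique). -/
theorem stmt6 :
    (∀ w ∈ simplex 2, psi exQ exMu 0 w = 3 / 4000) ∧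
    Tstar exQ exMu 0 = 3 / 4000 ∧
    {w ∈ simplex 2 | psi exQ exMu 0 w = Tstar exQ exMu 0} = simplex 2 := by
  have hT : Tstar exQ exMu 0 = 3 / 4000 := by
    have : {v : ℝ | ∃ w ∈ simplex 2, v = psi exQ exMu 0 w} = {3 / 4000} := by
      ext v
      constructor
      · rintro ⟨w, hw, rfl⟩
        exact psi_ex hw
      · rintro rfl
        have hw : ![1, 0] ∈ simplex 2 := by simp [simplex, Fin.forall_fin_two]
        exact ⟨_, hw, (psi_ex hw).symm⟩
    rw [Tstar, this, csSup_singleton]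
  refine ⟨fun w hw => psi_ex hw, hT, ?_⟩
  ext w
  exact ⟨fun h => h.1, fun h => ⟨h, (psi_ex h).trans hT.symm⟩⟩
end

section
/- Let K ≥ 2, let a ≠ b be indices in [K], let n ∈ ℝ^K with n_k > 0 for all k, and let x ∈ ℝ^K. Define Z_{a,b}(n, x) = inf { Σ_k n_k (x_k − μ_k)²/2 : μ ∈ ℝ^K, μ_a ≤ μ_b } − inf { Σ_k n_k (x_k − μ_k)²/2 : μ ∈ ℝ^K, μ_a ≥ μ_b }, and let x̄_{a,b} = (n_a x_a + n_b x_b)/(n_a + n_b). Then: (i) if x_a ≥ x_b, Z_{a,b}(n, x) = n_a (x_a − x̄_{a,b})²/2 + n_b (x_b − x̄_{a,b})²/2; (ii) Z_{a,b}(n, x) = −Z_{b,a}(n, x); and (iii) Z_{a,b}(n, x) ≥ 0 if and only if x_a ≥ x_b. -/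
/-!
When `x b ≤ x a`, the point `x` itself is feasible for the constraint `μ b ≤ μ a`, so the second
infimum is `0`. For the constraint `μ a ≤ μ b`, all coordinates other than `a` and `b` can be left
at `x`, and the two-coordinate problem is solved by moving both to the weighted mean `x̄`: with
`u = x a - μ a` and `v = x b - μ b`, the identity
`(p + q) (p u² + q v²) = (p u + q v)² + p q (u - v)²` together with `u - v ≥ x a - x b ≥ 0` gives
the lower bound (`pair_lower_bound`), and `x̄` attains it. Antisymmetry is immediate from the
definition, and the sign statement follows since the value is positive as soon as `x b < x a`.
-/

/-- The GLRT statistic between arms `a` and `b` with pull counts `n` and empirical means `x`: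
`Z_{a,b}(n, x) = inf{∑_k n_k (x_k − μ_k)²/2 : μ_a ≤ μ_b} − inf{∑_k n_k (x_k − μ_k)²/2 : μ_a ≥ μ_b}`. -/
noncomputable def Zstat {K : ℕ} (n x : Fin K → ℝ) (a b : Fin K) : ℝ :=
  sInf {v : ℝ | ∃ μ : Fin K → ℝ, μ a ≤ μ b ∧ v = ∑ k, n k * (x k - μ k) ^ 2 / 2} -
    sInf {v : ℝ | ∃ μ : Fin K → ℝ, μ b ≤ μ a ∧ v = ∑ k, n k * (x k - μ k) ^ 2 / 2}

/-- The two-arm problem: among pairs with `s ≤ t`, the weighted squared distance to `(y, z)` with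
`z ≤ y` is at least its value at the weighted mean. -/
theorem pair_lower_bound {p q y z s t : ℝ} (hp : 0 < p) (hq : 0 < q) (hzy : z ≤ y) (hst : s ≤ t) :
    p * (y - (p * y + q * z) / (p + q)) ^ 2 / 2 + q * (z - (p * y + q * z) / (p + q)) ^ 2 / 2 ≤
      p * (y - s) ^ 2 / 2 + q * (z - t) ^ 2 / 2 := by
  have hpq : 0 < p + q := by positivity
  have hval : p * (y - (p * y + q * z) / (p + q)) ^ 2 / 2 +
      q * (z - (p * y + q * z) / (p + q)) ^ 2 / 2 = p * q * (y - z) ^ 2 / (2 * (p + q)) := by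
    field_simp
    ring
  rw [hval, div_le_iff₀ (by positivity)]
  have hsq : (y - z) ^ 2 ≤ ((y - s) - (z - t)) ^ 2 :=
    pow_le_pow_left₀ (by linarith) (by linarith) 2
  have hmul := mul_le_mul_of_nonneg_left hsq (mul_pos hp hq).le
  nlinarith [sq_nonneg (p * (y - s) + q * (z - t))]

theorem Zstat_eq_of_le {K : ℕ} {a b : Fin K} (hab : a ≠ b) {n : Fin K → ℝ} (hn : ∀ k, 0 < n k)
    {x : Fin K → ℝ} (hx : x b ≤ x a) :
    Zstat n x a b =
      n a * (x a - (n a * x a + n b * x b) / (n a + n b)) ^ 2 / 2 +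
      n b * (x b - (n a * x a + n b * x b) / (n a + n b)) ^ 2 / 2 := by
  have hterm : ∀ (μ : Fin K → ℝ) (k : Fin K), 0 ≤ n k * (x k - μ k) ^ 2 / 2 := fun μ k => by
    have := hn k
    positivity
  have hfree : IsLeast {v : ℝ | ∃ μ : Fin K → ℝ, μ b ≤ μ a ∧
      v = ∑ k, n k * (x k - μ k) ^ 2 / 2} 0 := by
    refine ⟨⟨x, hx, by simp⟩, ?_⟩
    rintro v ⟨μ, -, rfl⟩
    exact Finset.sum_nonneg fun k _ => hterm μ k
  have hbind : IsLeast {v : ℝ | ∃ μ : Fin K → ℝ, μ a ≤ μ b ∧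
      v = ∑ k, n k * (x k - μ k) ^ 2 / 2}
      (n a * (x a - (n a * x a + n b * x b) / (n a + n b)) ^ 2 / 2 +
        n b * (x b - (n a * x a + n b * x b) / (n a + n b)) ^ 2 / 2) := by
    constructor
    · -- The minimiser: `x` with both coordinates `a` and `b` replaced by the weighted mean.
      refine ⟨fun k => if k = a ∨ k = b then (n a * x a + n b * x b) / (n a + n b) else x k,
        by simp, ?_⟩
      rw [Fintype.sum_eq_add a b hab]
      · simp
      · rintro k ⟨hka, hkb⟩
        simp [hka, hkb]
    · rintro v ⟨μ, hμ, rfl⟩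
      refine (pair_lower_bound (hn a) (hn b) hx hμ).trans ?_
      rw [← Finset.sum_pair (f := fun k => n k * (x k - μ k) ^ 2 / 2) hab]
      exact Finset.sum_le_sum_of_subset_of_nonneg (Finset.subset_univ _) fun k _ _ => hterm μ k
  rw [Zstat, hfree.csInf_eq, hbind.csInf_eq, sub_zero]

theorem Zstat_antisymm {K : ℕ} (n x : Fin K → ℝ) (a b : Fin K) :
    Zstat n x a b = -Zstat n x b a := by
  simp only [Zstat, neg_sub]

/-- with `x̄_{a,b} = (n_a x_a + n_b x_b)/(n_a + n_b)`:
(i) if `x_a ≥ x_b` then `Z_{a,b} = n_a (x_a − x̄_{a,b})²/2 + n_b (x_b − x̄_{a,b})²/2`;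
(ii) `Z_{a,b} = −Z_{b,a}`; (iii) `Z_{a,b} ≥ 0 ↔ x_a ≥ x_b`. -/
theorem stmt8 (K : ℕ) (hK : 2 ≤ K) (a b : Fin K) (hab : a ≠ b)
    (n : Fin K → ℝ) (hn : ∀ k, 0 < n k) (x : Fin K → ℝ) :
    (x b ≤ x a →
      Zstat n x a b =
        n a * (x a - (n a * x a + n b * x b) / (n a + n b)) ^ 2 / 2 +
        n b * (x b - (n a * x a + n b * x b) / (n a + n b)) ^ 2 / 2) ∧
    Zstat n x a b = -Zstat n x b a ∧
    (0 ≤ Zstat n x a b ↔ x b ≤ x a) := by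
  refine ⟨Zstat_eq_of_le hab hn, Zstat_antisymm n x a b, fun hZ => ?_, fun hx => ?_⟩
  · by_contra! hlt
    rw [Zstat_antisymm, Zstat_eq_of_le hab.symm hn hlt.le] at hZ
    have ha := hn a
    have hb := hn b
    -- The weighted mean `m` cannot equal both `x a` and `x b`; here the value is forced to be `0`.
    set m := (n b * x b + n a * x a) / (n b + n a)
    have h1 : 0 ≤ n b * (x b - m) ^ 2 := by positivity
    have h2 : 0 ≤ n a * (x a - m) ^ 2 := by positivity
    have h3 : n b * (x b - m) ^ 2 = 0 := by linarith
    have h4 : n a * (x a - m) ^ 2 = 0 := by linarith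
    have h5 : x b - m = 0 := by simpa [hb.ne'] using h3
    have h6 : x a - m = 0 := by simpa [ha.ne'] using h4
    linarith
  · rw [Zstat_eq_of_le hab hn hx]
    have ha := hn a
    have hb := hn b
    positivity
end

section
/- Let K ≥ 2, n ∈ ℝ^K with n_k > 0 for all k, and x ∈ ℝ^K. Define Z_{a,b}(n, x) = inf { Σ_k n_k (x_k − μ_k)²/2 : μ ∈ ℝ^K, μ_a ≤ μ_b } − inf { Σ_k n_k (x_k − μ_k)²/2 : μ ∈ ℝ^K, μ_a ≥ μ_b } for a ≠ b. Then every index a* satisfying x_{a*} = max_{k ∈ [K]} x_k also maximises the map a ↦ min_{b ≠ a} Z_{a,b}(n, x) over a ∈ [K]. -/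
lemma sInf_cost_nonneg {K : ℕ} (n x : Fin K → ℝ) (hn : ∀ k, 0 < n k) (a b : Fin K) :
    0 ≤ sInf {v : ℝ | ∃ μ : Fin K → ℝ, μ a ≤ μ b ∧ v = ∑ k, n k * (x k - μ k) ^ 2 / 2} := by
  apply Real.sInf_nonneg
  rintro v ⟨μ, -, rfl⟩
  exact Finset.sum_nonneg fun k _ => by have := hn k; positivity

lemma sInf_cost_nonpos {K : ℕ} (n x : Fin K → ℝ) (hn : ∀ k, 0 < n k) {a b : Fin K}
    (h : x a ≤ x b) :
    sInf {v : ℝ | ∃ μ : Fin K → ℝ, μ a ≤ μ b ∧ v = ∑ k, n k * (x k - μ k) ^ 2 / 2} ≤ 0 := by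
  apply csInf_le
  · refine ⟨0, ?_⟩
    rintro v ⟨μ, -, rfl⟩
    exact Finset.sum_nonneg fun k _ => by have := hn k; positivity
  · exact ⟨x, h, by simp⟩

lemma Zstat_nonneg {K : ℕ} (n x : Fin K → ℝ) (hn : ∀ k, 0 < n k) {a b : Fin K}
    (h : x b ≤ x a) : 0 ≤ Zstat n x a b :=
  sub_nonneg.2 ((sInf_cost_nonpos n x hn h).trans (sInf_cost_nonneg n x hn a b))

lemma Zstat_nonpos {K : ℕ} (n x : Fin K → ℝ) (hn : ∀ k, 0 < n k) {a b : Fin K}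
    (h : x a ≤ x b) : Zstat n x a b ≤ 0 :=
  sub_nonpos.2 ((sInf_cost_nonpos n x hn h).trans (sInf_cost_nonneg n x hn b a))

/-- every index `a*` maximising the empirical means `x` also maximises the map
`a ↦ min_{b ≠ a} Z_{a,b}(n, x)`. -/
theorem stmt9 (K : ℕ) (hK : 2 ≤ K) (n : Fin K → ℝ) (hn : ∀ k, 0 < n k) (x : Fin K → ℝ)
    (astar : Fin K) (hstar : ∀ k, x k ≤ x astar) :
    ∀ a : Fin K,
      (⨅ b : {b : Fin K // b ≠ a}, Zstat n x a b.1) ≤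
        ⨅ b : {b : Fin K // b ≠ astar}, Zstat n x astar b.1 := by
  intro a
  by_cases ha : astar = a
  · subst ha
    exact le_rfl
  · have h₁ : (⨅ b : {b : Fin K // b ≠ a}, Zstat n x a b.1) ≤ Zstat n x a astar :=
      ciInf_le (f := fun b : {b : Fin K // b ≠ a} => Zstat n x a b.1)
        (Set.finite_range _).bddBelow ⟨astar, ha⟩
    have h₂ : 0 ≤ ⨅ b : {b : Fin K // b ≠ astar}, Zstat n x astar b.1 :=
      Real.iInf_nonneg fun b => Zstat_nonneg n x hn (hstar b.1)
    exact (h₁.trans (Zstat_nonpos n x hn (hstar a))).trans h₂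
end

section
/- Let M ≥ 1, let C ⊆ [0,1]^M be a nonempty closed convex set, let ε > 0, let t₀ be a positive integer, and let w : ℕ → [0,1]^M be a sequence with d∞(w(s), C) ≤ ε for all s ≥ t₀. Define the running average w̄(t) = (1/t) Σ_{s=1}^{t} w(s). Then for every integer t ≥ t₀/(8ε), one has d∞(w̄(t), C) ≤ 9ε. -/
/-!
For `δ > 0`, each `w s` has a point `v s ∈ C` within `ε + δ` when `s ≥ t₀`, and any point of `C` is
within `1` of `w s` otherwise, since everything lies in the unit cube. The average of the `v s` lies
in `C` by convexity, and it differs from the average of the `w s` by at most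
`ε + δ + t₀ / t ≤ 9 ε + δ` in every coordinate. Letting `δ → 0` gives the bound.
-/

/-- The sup-distance `d∞(u, C) = inf_{v ∈ C} max_m |u_m − v_m|`. -/
noncomputable def dinfSet {M : ℕ} (u : Fin M → ℝ) (C : Set (Fin M → ℝ)) : ℝ :=
  sInf ((fun v => ⨆ m, |u m - v m|) '' C)

theorem dinfSet_le {M : ℕ} (u : Fin M → ℝ) {C : Set (Fin M → ℝ)} {v : Fin M → ℝ} (hv : v ∈ C)
    {r : ℝ} (hr : 0 ≤ r) (h : ∀ m, |u m - v m| ≤ r) : dinfSet u C ≤ r := by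
  have hbdd : BddBelow ((fun v => ⨆ m, |u m - v m|) '' C) := by
    refine ⟨0, ?_⟩
    rintro _ ⟨x, _, rfl⟩
    exact Real.iSup_nonneg fun m => abs_nonneg _
  exact (csInf_le hbdd ⟨v, hv, rfl⟩).trans (Real.iSup_le h hr)

theorem exists_of_dinfSet_lt {M : ℕ} (u : Fin M → ℝ) {C : Set (Fin M → ℝ)} (hC : C.Nonempty)
    {r : ℝ} (h : dinfSet u C < r) : ∃ v ∈ C, ∀ m, |u m - v m| ≤ r := by
  obtain ⟨_, ⟨v, hv, rfl⟩, hlt⟩ := exists_lt_of_csInf_lt (hC.image _) h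
  exact ⟨v, hv, fun m =>
    (le_ciSup (f := fun m => |u m - v m|) (Set.finite_range _).bddAbove m).trans hlt.le⟩

/-- if `C ⊆ [0,1]^M` is nonempty, closed and convex, `w : ℕ → [0,1]^M`
satisfies `d∞(w(s), C) ≤ ε` for all `s ≥ t₀`, and `w̄(t) = (1/t) ∑_{s=1}^t w(s)`, then
`d∞(w̄(t), C) ≤ 9ε` for every integer `t ≥ t₀/(8ε)`. -/
theorem stmt10 (M : ℕ) (hM : 1 ≤ M)
    (C : Set (Fin M → ℝ)) (hC_ne : C.Nonempty) (hC_closed : IsClosed C)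
    (hC_convex : Convex ℝ C) (hC_sub : ∀ v ∈ C, ∀ m, v m ∈ Set.Icc (0 : ℝ) 1)
    (ε : ℝ) (hε : 0 < ε) (t₀ : ℕ) (ht₀ : 1 ≤ t₀)
    (w : ℕ → Fin M → ℝ) (hw : ∀ s m, w s m ∈ Set.Icc (0 : ℝ) 1)
    (hclose : ∀ s, t₀ ≤ s → dinfSet (w s) C ≤ ε) :
    ∀ t : ℕ, (t₀ : ℝ) / (8 * ε) ≤ (t : ℝ) →
      dinfSet (fun m => (1 / (t : ℝ)) * ∑ s ∈ Finset.Icc 1 t, w s m) C ≤ 9 * ε := by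
  intro t ht
  have ht₀' : (0 : ℝ) < t₀ := by exact_mod_cast ht₀
  have htpos : (0 : ℝ) < t := lt_of_lt_of_le (by positivity) ht
  have hratio : (t₀ : ℝ) ≤ t * (8 * ε) := (div_le_iff₀ (by positivity)).mp ht
  refine le_of_forall_pos_le_add fun δ hδ => ?_
  have hex : ∀ s, ∃ v ∈ C, ∀ m, |w s m - v m| ≤ (ε + δ) + if s < t₀ then 1 else 0 := by
    intro s
    by_cases hs : s < t₀
    · obtain ⟨v, hv⟩ := hC_ne
      refine ⟨v, hv, fun m => ?_⟩
      have h1 := hw s m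
      have h2 := hC_sub v hv m
      rw [if_pos hs, abs_le]
      constructor <;> linarith [h1.1, h1.2, h2.1, h2.2]
    · obtain ⟨v, hv, h⟩ := exists_of_dinfSet_lt (w s) hC_ne
        (lt_of_le_of_lt (hclose s (not_lt.mp hs)) (lt_add_of_pos_right ε hδ))
      exact ⟨v, hv, fun m => by simpa [hs] using h m⟩
  choose v hvC hv using hex
  have hmem : (∑ s ∈ Finset.Icc 1 t, (1 / (t : ℝ)) • v s) ∈ C := by
    refine hC_convex.sum_mem (fun _ _ => by positivity) ?_ fun s _ => hvC s
    simp [htpos.ne']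
  refine dinfSet_le _ hmem (by positivity) fun m => ?_
  have hcount : ∑ s ∈ Finset.Icc 1 t, (if s < t₀ then (1 : ℝ) else 0) ≤ t₀ := by
    rw [Finset.sum_boole]
    have hsub : (Finset.Icc 1 t).filter (· < t₀) ⊆ Finset.range t₀ := fun s hs =>
      Finset.mem_range.mpr (Finset.mem_filter.mp hs).2
    simpa using Finset.card_le_card hsub
  have hsum : |∑ s ∈ Finset.Icc 1 t, (w s m - v s m)| ≤ t * (ε + δ) + t₀ := by
    calc |∑ s ∈ Finset.Icc 1 t, (w s m - v s m)|
        ≤ ∑ s ∈ Finset.Icc 1 t, |w s m - v s m| := Finset.abs_sum_le_sum_abs _ _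
      _ ≤ ∑ s ∈ Finset.Icc 1 t, ((ε + δ) + if s < t₀ then 1 else 0) :=
          Finset.sum_le_sum fun s _ => hv s m
      _ ≤ t * (ε + δ) + t₀ := by
          rw [Finset.sum_add_distrib, Finset.sum_const, Nat.card_Icc, Nat.add_sub_cancel,
            nsmul_eq_mul]
          exact add_le_add le_rfl hcount
  have heq : (1 / (t : ℝ)) * ∑ s ∈ Finset.Icc 1 t, w s m
      - (∑ s ∈ Finset.Icc 1 t, (1 / (t : ℝ)) • v s) m
      = (∑ s ∈ Finset.Icc 1 t, (w s m - v s m)) / t := by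
    rw [Finset.sum_apply, Finset.sum_sub_distrib]
    simp only [Pi.smul_apply, smul_eq_mul, ← Finset.mul_sum]
    ring
  rw [heq, abs_div, abs_of_pos htpos, div_le_iff₀ htpos]
  linarith
end

section
/- Let M ≥ 2 be an integer, ε ≥ 0, and t₀ a nonnegative integer. For each m ∈ [M] let e_m : ℕ → ℝ be a sequence with Σ_{m=1}^M e_m(t) = 0 for every t, and let ŵ(t) ∈ Σ_M for every t (i.e., ŵ_m(t) ≥ 0 and Σ_m ŵ_m(t) = 1). Suppose that for all t ≥ t₀ and all m ∈ [M], e_m(t+1) ≤ e_m(t) + 𝟙{e_m(t) ≤ 9 t ε} − ŵ_m(t+1). Then for all t ≥ t₀ and all m ∈ [M]: (i) e_m(t) ≤ max{ e_m(t₀), 9 t ε + 1 }, and (ii) |e_m(t)| ≤ (M − 1) · max_{m' ∈ [M]} max{ e_{m'}(t₀), 9 t ε + 1 }. -/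
/-!
Write `B t = 9 * t * ε + 1`, which is nondecreasing in `t` because `ε ≥ 0`.

The upper bound follows by induction on `t`: while `e m t ≤ 9 * t * ε`, one step raises `e m` by at
most `1`, so it stays below `B t ≤ B (t + 1)`; otherwise `e m` does not increase.

For the absolute value, let `S` be the supremum on the right, so `S ≥ 1` and every `e m' t ≤ S`.
Then `e m t ≤ S ≤ (M - 1) * S` since `M ≥ 2`, and since the `e m' t` sum to zero, `-e m t` is the
sum of the other `M - 1` discrepancies, hence at most `(M - 1) * S`.
-/

/-- discrepancy bounds for the modified D-tracking rule. If the
discrepancies `e_m(t)` sum to zero at each time, the targets `ŵ(t)` lie in the simplex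
`Σ_M`, and for all `t ≥ t₀` and all `m`,
`e_m(t+1) ≤ e_m(t) + 𝟙{e_m(t) ≤ 9tε} − ŵ_m(t+1)`, then for all `t ≥ t₀` and all `m`:
(i) `e_m(t) ≤ max{e_m(t₀), 9tε + 1}`, and
(ii) `|e_m(t)| ≤ (M−1) · max_{m'} max{e_{m'}(t₀), 9tε + 1}`. -/
theorem stmt11 (M : ℕ) (hM : 2 ≤ M) (ε : ℝ) (hε : 0 ≤ ε) (t₀ : ℕ)
    (e : Fin M → ℕ → ℝ) (hsum : ∀ t, ∑ m, e m t = 0)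
    (what : ℕ → Fin M → ℝ)
    (hwhat : ∀ t, (∀ m, 0 ≤ what t m) ∧ ∑ m, what t m = 1)
    (hrec : ∀ t, t₀ ≤ t → ∀ m : Fin M,
      e m (t + 1) ≤
        e m t + (if e m t ≤ 9 * (t : ℝ) * ε then (1 : ℝ) else 0) - what (t + 1) m) :
    ∀ t, t₀ ≤ t → ∀ m : Fin M,
      e m t ≤ max (e m t₀) (9 * (t : ℝ) * ε + 1) ∧
      |e m t| ≤ ((M : ℝ) - 1) *
        (⨆ m' : Fin M, max (e m' t₀) (9 * (t : ℝ) * ε + 1)) := by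
  have upper : ∀ t, t₀ ≤ t → ∀ m : Fin M,
      e m t ≤ max (e m t₀) (9 * (t : ℝ) * ε + 1) := by
    intro t ht m
    induction t, ht using Nat.le_induction with
    | base => exact le_max_left _ _
    | succ t ht ih =>
      have hstep := hrec t ht m
      have hw := (hwhat (t + 1)).1 m
      push_cast
      by_cases hle : e m t ≤ 9 * (t : ℝ) * ε
      · rw [if_pos hle] at hstep
        exact le_max_of_le_right (by linarith)
      · rw [if_neg hle] at hstep
        have hmono : max (e m t₀) (9 * (t : ℝ) * ε + 1)
            ≤ max (e m t₀) (9 * ((t : ℝ) + 1) * ε + 1) :=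
          max_le_max le_rfl (by linarith)
        linarith
  intro t ht m
  refine ⟨upper t ht m, ?_⟩
  set S : ℝ := ⨆ m' : Fin M, max (e m' t₀) (9 * (t : ℝ) * ε + 1)
  have hS : ∀ m' : Fin M, max (e m' t₀) (9 * (t : ℝ) * ε + 1) ≤ S := fun m' =>
    le_ciSup (f := fun m' : Fin M => max (e m' t₀) (9 * (t : ℝ) * ε + 1))
      (Set.finite_range _).bddAbove m'
  have heS : ∀ m' : Fin M, e m' t ≤ S := fun m' => (upper t ht m').trans (hS m')
  have hS0 : 0 ≤ S := by
    have h1 := (le_max_right _ _).trans (hS m)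
    have h2 : 0 ≤ 9 * (t : ℝ) * ε := by positivity
    linarith
  have hM' : (2 : ℝ) ≤ M := by exact_mod_cast hM
  have hsplit : e m t + ∑ m' ∈ Finset.univ.erase m, e m' t = 0 := by
    rw [Finset.add_sum_erase _ (fun m' => e m' t) (Finset.mem_univ m)]
    exact hsum t
  have hothers : ∑ m' ∈ Finset.univ.erase m, e m' t ≤ ((M : ℝ) - 1) * S := by
    have h := Finset.sum_le_card_nsmul (Finset.univ.erase m) (fun m' => e m' t) S
      (fun m' _ => heS m')
    rw [Finset.card_erase_of_mem (Finset.mem_univ m), Finset.card_univ, Fintype.card_fin,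
      nsmul_eq_mul, Nat.cast_sub (by omega), Nat.cast_one] at h
    exact h
  rw [abs_le]
  constructor
  · linarith
  · nlinarith [heS m]
end
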